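/- (Moen: Coifman–Fefferman type estimate for multilinear fractional integrals) Suppose 0<α<mn. Then for every w ∈ A_∞ and all 0<s<∞ there is a constant C (depending on w, s, α, m, n) such that ∫_{ℝ^n} |I_α(f⃗)(x)|^s w(x) dx ≤ C ∫_{ℝ^n} M_α(f⃗)(x)^s w(x) dx for all f⃗=(f_1,…,f_m) with each f_i bounded with compact support. -/

import Mathlib

/-!
Split the kernel of `𝓘_α` dyadically. At the scale `2^{-j}` it contributes
`a_j(x) = 2^{-jα} ∏ₗ ⟨fₗ⟩`, where `⟨fₗ⟩` is the mean of `|fₗ|` over the triple of the dyadic cube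
around `x`; hence `|𝓘_α(f⃗)| ≲ ∑_j a_j`, while `sup_j a_j ≲ 𝓜_α(f⃗)`, and it suffices to bound the
sum by the supremum in `L^s(w)`.

The sequence `a_j` is adapted to the dyadic filtration. On a dyadic cube of generation `j`,
Tonelli's theorem and Hölder's inequality show that the mean of `a_{j+d}^{1/m}` is at most a
constant times `2^{-dα/m} a_j^{1/m}`. By Markov's inequality the set `G_j` on which
`a_{j+d} ≤ L q^d a_j` for all `d ≥ 0` therefore fills half of the cube, and the `A_∞` condition
turns this into a fixed proportion of the `w`-mass. So in an integral of terms that are measurable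
at generation `j` one may insert the indicator of `G_j`, after which the sum over `j` is geometric
and is controlled by `sup_j a_j`. For `s ≤ 1` this is applied to `a_j^s`. For `s > 1` it is
applied to `a_j (∑_{i ≤ j} a_i)^{s-1}`, whose sum over `j` dominates `(∑_j a_j)^s / s`; then
Hölder's inequality gives
`∫ (∑_j a_j)^s w ≲ (∫ (sup_j a_j)^s w)^{1/s} (∫ (∑_j a_j)^s w)^{(s-1)/s}`, and the last factor is
absorbed, being finite for finite partial sums.
-/

open MeasureTheory ENNReal Set

noncomputable section

/-- Euclidean space `ℝ^n`. -/
abbrev ESp (n : ℕ) := EuclideanSpace ℝ (Fin n)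

/-- An axis-parallel cube with positive finite side length. -/
def IsCube {n : ℕ} (Q : Set (ESp n)) : Prop :=
  ∃ (c : Fin n → ℝ) (h : ℝ), 0 < h ∧ Q = {x : ESp n | ∀ i, c i ≤ x i ∧ x i ≤ c i + h}

/-- The measure `w(E) = ∫_E w` associated to a weight `w`. -/
def wMeas {n : ℕ} (w : ESp n → ℝ) (E : Set (ESp n)) : ℝ≥0∞ :=
  ∫⁻ x in E, ENNReal.ofReal (w x)

/-- A weight: a nonnegative locally integrable function, positive (and finite) a.e. -/
def IsWeight {n : ℕ} (w : ESp n → ℝ) : Prop :=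
  Measurable w ∧ (∀ x, 0 ≤ w x) ∧ (∀ᵐ x ∂(volume : Measure (ESp n)), 0 < w x) ∧
    ∀ Q : Set (ESp n), IsCube Q → wMeas w Q < ⊤

/-- `C` is an admissible `A₁` constant for `w`. -/
def A1Const {n : ℕ} (w : ESp n → ℝ) (C : ℝ≥0∞) : Prop :=
  ∀ Q : Set (ESp n), IsCube Q →
    (volume Q)⁻¹ * wMeas w Q ≤ C * essInf (fun x => ENNReal.ofReal (w x)) (volume.restrict Q)

/-- The Muckenhoupt class `A₁`. -/
def IsA1 {n : ℕ} (w : ESp n → ℝ) : Prop := ∃ C : ℝ≥0∞, C < ⊤ ∧ A1Const w C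

/-- The Muckenhoupt class `A_p`, `1 < p < ∞`. -/
def IsAp {n : ℕ} (w : ESp n → ℝ) (p : ℝ) : Prop :=
  ∃ C : ℝ≥0∞, C < ⊤ ∧ ∀ Q : Set (ESp n), IsCube Q →
    ((volume Q)⁻¹ * wMeas w Q) *
      ((volume Q)⁻¹ * ∫⁻ x in Q, ENNReal.ofReal (w x) ^ (1 - p / (p - 1))) ^ (p - 1) ≤ C

/-- The class `A_∞ = ⋃_{p ≥ 1} A_p`. -/
def IsAinfty {n : ℕ} (w : ESp n → ℝ) : Prop :=
  IsA1 w ∨ ∃ p : ℝ, 1 < p ∧ IsAp w p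

/-- The Hardy–Littlewood maximal function (over cubes). -/
def maxFn {n : ℕ} (f : ESp n → ℝ) (x : ESp n) : ℝ≥0∞ :=
  ⨆ (Q : Set (ESp n)) (_ : IsCube Q) (_ : x ∈ Q),
    (volume Q)⁻¹ * ∫⁻ y in Q, ENNReal.ofReal |f y|

/-- The Fujii–Wilson `A_∞` constant. -/
def FW {n : ℕ} (w : ESp n → ℝ) : ℝ≥0∞ :=
  ⨆ (Q : Set (ESp n)) (_ : IsCube Q),
    (wMeas w Q)⁻¹ * ∫⁻ x in Q, maxFn (Q.indicator w) x

/-- The weighted weak `L^{q,∞}(w)` quasinorm of `g`. -/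
def wnorm {n : ℕ} (g : ESp n → ℝ≥0∞) (q : ℝ) (w : ESp n → ℝ) : ℝ≥0∞ :=
  ⨆ (t : ℝ) (_ : 0 < t), ENNReal.ofReal t * (wMeas w {x | ENNReal.ofReal t < g x}) ^ (1 / q)

/-- The weighted `L¹(w)` norm. -/
def L1norm {n : ℕ} (f : ESp n → ℝ) (w : ESp n → ℝ) : ℝ≥0∞ :=
  ∫⁻ x, ENNReal.ofReal (|f x| * w x)

/-- The fractional maximal operator `M_α`. -/
def fracM {n : ℕ} (α : ℝ) (f : ESp n → ℝ) (x : ESp n) : ℝ≥0∞ :=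
  ⨆ (Q : Set (ESp n)) (_ : IsCube Q) (_ : x ∈ Q),
    ((volume Q) ^ (1 - α / (n : ℝ)))⁻¹ * ∫⁻ y in Q, ENNReal.ofReal |f y|

/-- The fractional integral (Riesz potential) `I_α`. -/
def fracI {n : ℕ} (α : ℝ) (f : ESp n → ℝ) (x : ESp n) : ℝ :=
  ∫ y, f y / dist x y ^ ((n : ℝ) - α)

/-- The multi(sub)linear maximal function `𝓜`. -/
def multiM {n m : ℕ} (f : Fin m → ESp n → ℝ) (x : ESp n) : ℝ≥0∞ :=
  ⨆ (Q : Set (ESp n)) (_ : IsCube Q) (_ : x ∈ Q),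
    ∏ i, (volume Q)⁻¹ * ∫⁻ y in Q, ENNReal.ofReal |f i y|

/-- The multi(sub)linear fractional maximal operator `𝓜_α`. -/
def multiMα {n m : ℕ} (α : ℝ) (f : Fin m → ESp n → ℝ) (x : ESp n) : ℝ≥0∞ :=
  ⨆ (Q : Set (ESp n)) (_ : IsCube Q) (_ : x ∈ Q),
    ∏ i, ((volume Q) ^ (1 - α / ((m : ℝ) * (n : ℝ))))⁻¹ * ∫⁻ y in Q, ENNReal.ofReal |f i y|

/-- The multilinear fractional integral `𝓘_α`. -/
def multiIα {n m : ℕ} (α : ℝ) (f : Fin m → ESp n → ℝ) (x : ESp n) : ℝ :=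
  ∫ y : Fin m → ESp n, (∏ i, f i (y i)) / (∑ i, dist x (y i)) ^ ((m : ℝ) * (n : ℝ) - α)

/-- The multilinear class `A_{(1,…,1)}`. -/
def A11 {n m : ℕ} (w : Fin m → ESp n → ℝ) : Prop :=
  ∃ C : ℝ≥0∞, C < ⊤ ∧ ∀ Q : Set (ESp n), IsCube Q →
    ((volume Q)⁻¹ * ∫⁻ x in Q, ENNReal.ofReal (∏ i, w i x ^ ((m : ℝ)⁻¹))) ^ (m : ℝ) *
      ∏ i, (essInf (fun x => ENNReal.ofReal (w i x)) (volume.restrict Q))⁻¹ ≤ C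

/-! ### Sums against suprema for adapted sequences -/

theorem nnreal_add_rpow_le_rpow_add_mul {s : ℝ} (hs : 1 ≤ s) (x y : NNReal) :
    (x + y) ^ s ≤ x ^ s + s.toNNReal * (y * (x + y) ^ (s - 1)) := by
  rcases eq_zero_or_pos y with rfl | hy
  · simp
  have hy' : (0 : ℝ) < y := NNReal.coe_pos.2 hy
  have hslope := (convexOn_rpow hs).slope_le_of_hasDerivAt (x := x) (y := x + y)
    x.coe_nonneg (mem_Ici.2 (by positivity)) (by linarith) (Real.hasDerivAt_rpow_const (.inr hs))
  rw [slope_def_field, add_sub_cancel_left, div_le_iff₀ hy'] at hslope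
  rw [← NNReal.coe_le_coe]
  push_cast [Real.coe_toNNReal s (by linarith)]
  linarith

theorem ennreal_add_rpow_le_rpow_add_mul {s : ℝ} (hs : 1 ≤ s) (x y : ℝ≥0∞) :
    (x + y) ^ s ≤ x ^ s + ENNReal.ofReal s * (y * (x + y) ^ (s - 1)) := by
  have hs0 : 0 < s := by linarith
  have hs1 : 0 ≤ s - 1 := by linarith
  rcases eq_or_ne x ⊤ with rfl | hx
  · simp [hs0]
  rcases eq_or_ne y ⊤ with rfl | hy
  · have htop : (⊤ : ℝ≥0∞) ^ (s - 1) ≠ 0 := by simp [ENNReal.rpow_eq_zero_iff, hs1.not_gt]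
    simp [hs0, htop, ENNReal.top_mul, ENNReal.mul_top]
  lift x to NNReal using hx
  lift y to NNReal using hy
  rw [ENNReal.ofReal, ← ENNReal.coe_add, ← ENNReal.coe_rpow_of_nonneg _ hs0.le,
    ← ENNReal.coe_rpow_of_nonneg _ hs0.le, ← ENNReal.coe_rpow_of_nonneg _ hs1]
  exact_mod_cast nnreal_add_rpow_le_rpow_add_mul hs x y

theorem sum_rpow_le_sum_mul_rpow {ι : Type*} [LinearOrder ι] {s : ℝ} (hs : 1 ≤ s)
    (F : Finset ι) (a : ι → ℝ≥0∞) :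
    (∑ j ∈ F, a j) ^ s ≤
      ENNReal.ofReal s * ∑ j ∈ F, a j * (∑ i ∈ F with i ≤ j, a i) ^ (s - 1) := by
  induction F using Finset.induction_on_max with
  | empty => simp [zero_lt_one.trans_le hs]
  | insert k F hk ih =>
    have hkF : k ∉ F := fun h => (hk k h).false
    have htop : ∑ i ∈ insert k F with i ≤ k, a i = ∑ j ∈ F, a j + a k := by
      rw [Finset.filter_true_of_mem (by simpa using fun i hi => (hk i hi).le),
        Finset.sum_insert hkF, add_comm]
    have hlow : ∀ j ∈ F, ∑ i ∈ insert k F with i ≤ j, a i = ∑ i ∈ F with i ≤ j, a i :=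
      fun j hj => by rw [Finset.filter_insert, if_neg (hk j hj).not_ge]
    calc (∑ j ∈ insert k F, a j) ^ s = (∑ j ∈ F, a j + a k) ^ s := by
          rw [Finset.sum_insert hkF, add_comm]
      _ ≤ (∑ j ∈ F, a j) ^ s + ENNReal.ofReal s * (a k * (∑ j ∈ F, a j + a k) ^ (s - 1)) :=
          ennreal_add_rpow_le_rpow_add_mul hs _ _
      _ ≤ ENNReal.ofReal s * ∑ j ∈ F, a j * (∑ i ∈ F with i ≤ j, a i) ^ (s - 1) +
            ENNReal.ofReal s * (a k * (∑ j ∈ F, a j + a k) ^ (s - 1)) := by gcongr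
      _ = ENNReal.ofReal s *
            ∑ j ∈ insert k F, a j * (∑ i ∈ insert k F with i ≤ j, a i) ^ (s - 1) := by
          rw [Finset.sum_insert hkF, htop, mul_add, add_comm]
          congr 2
          exact Finset.sum_congr rfl fun j hj => by rw [hlow j hj]

theorem sum_rpow_le_of_le_one {ι : Type*} {s : ℝ} (hs : 0 < s) (hs1 : s ≤ 1) (F : Finset ι)
    (a : ι → ℝ≥0∞) : (∑ j ∈ F, a j) ^ s ≤ ∑ j ∈ F, a j ^ s :=
  Finset.le_sum_of_subadditive (fun x : ℝ≥0∞ => x ^ s) (ENNReal.zero_rpow_of_pos hs).le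
    (fun x y => ENNReal.rpow_add_le_add_rpow x y hs.le hs1) F a

theorem le_rpow_mul_of_le_mul_rpow_mul_rpow {s : ℝ} (hs : 1 < s) {x y c : ℝ≥0∞} (hx : x ≠ ⊤)
    (h : x ≤ c * (y ^ (1 / s) * x ^ ((s - 1) / s))) : x ≤ c ^ s * y := by
  have hs0 : 0 < s := by linarith
  rcases eq_or_ne x 0 with rfl | hx0
  · exact zero_le
  have hsplit : x ^ (1 / s) * x ^ ((s - 1) / s) = x := by
    rw [← ENNReal.rpow_add _ _ hx0 hx, ← add_div, add_sub_cancel, div_self hs0.ne',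
      ENNReal.rpow_one]
  have hroot : x ^ (1 / s) ≤ c * y ^ (1 / s) := by
    refine (ENNReal.mul_le_mul_iff_left (c := x ^ ((s - 1) / s)) (by simp [hx0, hx])
      (ENNReal.rpow_ne_top_of_nonneg (div_nonneg (by linarith) hs0.le) hx)).1 ?_
    rwa [hsplit, mul_assoc]
  rw [one_div, ENNReal.rpow_inv_le_iff hs0] at hroot
  simpa [ENNReal.mul_rpow_of_nonneg _ _ hs0.le, ENNReal.rpow_inv_rpow hs0.ne'] using hroot

theorem sum_rpow_le_of_geometric {s : ℝ} (hs : 0 < s) {L q : ℝ≥0∞} {a : ℤ → ℝ≥0∞} {F : Finset ℤ}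
    (hF : ∀ j ∈ F, ∀ d : ℕ, a (j + d) ≤ L * q ^ d * a j) :
    ∑ j ∈ F, a j ^ s ≤ L ^ s * (1 - q ^ s)⁻¹ * (⨆ j, a j) ^ s := by
  rcases F.eq_empty_or_nonempty with rfl | hne
  · simp
  set j₀ := F.min' hne
  have hshift : ∀ j ∈ F, j₀ + (j - j₀).toNat = j := fun j hj => by
    have := F.min'_le j hj
    omega
  have hinj : Set.InjOn (fun j => (j - j₀).toNat) F := fun i hi j hj hij => by
    rw [← hshift i hi, ← hshift j hj]
    exact congrArg (fun d : ℕ => j₀ + (d : ℤ)) hij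
  calc ∑ j ∈ F, a j ^ s = ∑ d ∈ F.image fun j => (j - j₀).toNat, a (j₀ + d) ^ s := by
        rw [Finset.sum_image hinj]
        exact Finset.sum_congr rfl fun j hj => by rw [hshift j hj]
    _ ≤ ∑' d : ℕ, a (j₀ + d) ^ s := ENNReal.sum_le_tsum _
    _ ≤ ∑' d : ℕ, (L * q ^ d * ⨆ j, a j) ^ s := by
        gcongr with d
        exact (hF j₀ (F.min'_mem hne) d).trans (by gcongr; exact le_iSup a j₀)
    _ = ∑' d : ℕ, L ^ s * (⨆ j, a j) ^ s * (q ^ s) ^ d := by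
        congr 1 with d
        rw [ENNReal.mul_rpow_of_nonneg _ _ hs.le, ENNReal.mul_rpow_of_nonneg _ _ hs.le,
          ← ENNReal.rpow_natCast_mul, mul_comm (d : ℝ), ENNReal.rpow_mul_natCast, mul_right_comm]
    _ = L ^ s * (1 - q ^ s)⁻¹ * (⨆ j, a j) ^ s := by
        rw [ENNReal.tsum_mul_left, ENNReal.tsum_geometric, mul_right_comm]

/-- The set `G` retains a fixed proportion, at least `C⁻¹`, of the `ν`-mass of every set of the
σ-algebra `m`. -/
def RetainsMass {X : Type*} (m : MeasurableSpace X) {_ : MeasurableSpace X} (ν : Measure X)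
    (C : ℝ≥0∞) (G : Set X) : Prop :=
  ∀ E, MeasurableSet[m] E → ν E ≤ C * ν (E ∩ G)

theorem RetainsMass.lintegral_le {X : Type*} {m mX : MeasurableSpace X} (hm : m ≤ mX)
    {ν : Measure X} {C : ℝ≥0∞} {G : Set X} (hG : RetainsMass m ν C G) (hGm : MeasurableSet G)
    {h : X → ℝ≥0∞} (hh : Measurable[m] h) :
    ∫⁻ x, h x ∂ν ≤ C * ∫⁻ x, G.indicator h x ∂ν := by
  have hle : ν.trim hm ≤ C • (ν.restrict G).trim hm := by
    refine Measure.le_iff.2 fun E hE => ?_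
    rw [Measure.smul_apply, trim_measurableSet_eq hm hE, trim_measurableSet_eq hm hE,
      Measure.restrict_apply (hm E hE)]
    exact hG E hE
  rw [lintegral_indicator hGm, ← lintegral_trim hm hh, ← lintegral_trim hm hh,
    ← smul_eq_mul, ← lintegral_smul_measure]
  exact lintegral_mono' hle le_rfl

section Filtration

variable {X : Type*} {mX : MeasurableSpace X} {𝓕 : Filtration ℤ mX} {ν : Measure X}
  {C L q : ℝ≥0∞} {s : ℝ} {a : ℤ → X → ℝ≥0∞} {G : ℤ → Set X}

theorem sum_lintegral_le_lintegral_sum_indicator {b : ℤ → X → ℝ≥0∞}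
    (hb : ∀ j, Measurable[𝓕 j] (b j)) (hGm : ∀ j, MeasurableSet (G j))
    (hG : ∀ j, RetainsMass (𝓕 j) ν C (G j)) (F : Finset ℤ) :
    ∑ j ∈ F, ∫⁻ x, b j x ∂ν ≤ C * ∫⁻ x, ∑ j ∈ F, (G j).indicator (b j) x ∂ν := by
  rw [lintegral_finsetSum _ fun j _ => ((hb j).mono (𝓕.le j) le_rfl).indicator (hGm j),
    Finset.mul_sum]
  gcongr with j
  exact (hG j).lintegral_le (𝓕.le j) (hGm j) (hb j)

theorem sum_indicator_rpow_le_of_geometric (hs : 0 < s)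
    (hgood : ∀ j, ∀ x ∈ G j, ∀ d : ℕ, a (j + d) x ≤ L * q ^ d * a j x) (F : Finset ℤ) (x : X) :
    ∑ j ∈ F, (G j).indicator (fun x => a j x ^ s) x ≤
      L ^ s * (1 - q ^ s)⁻¹ * (⨆ j, a j x) ^ s := by
  classical
  simp only [Set.indicator_apply]
  rw [← Finset.sum_filter]
  exact sum_rpow_le_of_geometric hs fun j hj => hgood j x (Finset.mem_filter.1 hj).2

theorem sum_indicator_mul_rpow_le_of_geometric (hs : 1 ≤ s)
    (hgood : ∀ j, ∀ x ∈ G j, ∀ d : ℕ, a (j + d) x ≤ L * q ^ d * a j x) (F : Finset ℤ) (x : X) :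
    ∑ j ∈ F, (G j).indicator (fun x => a j x * (∑ i ∈ F with i ≤ j, a i x) ^ (s - 1)) x ≤
      L * (1 - q)⁻¹ * ((⨆ j, a j x) * (∑ j ∈ F, a j x) ^ (s - 1)) := by
  calc ∑ j ∈ F, (G j).indicator (fun x => a j x * (∑ i ∈ F with i ≤ j, a i x) ^ (s - 1)) x
      ≤ ∑ j ∈ F, (G j).indicator (fun x => a j x ^ (1 : ℝ)) x *
          (∑ j ∈ F, a j x) ^ (s - 1) := by
        gcongr with j
        rw [← Set.indicator_mul_left (G j) _ fun x => (∑ j ∈ F, a j x) ^ (s - 1)]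
        refine Set.indicator_le_indicator ?_
        simp only [ENNReal.rpow_one]
        gcongr
        exact Finset.filter_subset _ _
    _ ≤ L * (1 - q)⁻¹ * (⨆ j, a j x) * (∑ j ∈ F, a j x) ^ (s - 1) := by
        rw [← Finset.sum_mul]
        gcongr
        simpa only [ENNReal.rpow_one] using
          sum_indicator_rpow_le_of_geometric zero_lt_one hgood F x
    _ = L * (1 - q)⁻¹ * ((⨆ j, a j x) * (∑ j ∈ F, a j x) ^ (s - 1)) := mul_assoc _ _ _

theorem lintegral_sum_rpow_le_of_le_one (hs : 0 < s) (hs1 : s ≤ 1)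
    (ha : ∀ j, Measurable[𝓕 j] (a j)) (hGm : ∀ j, MeasurableSet (G j))
    (hG : ∀ j, RetainsMass (𝓕 j) ν C (G j))
    (hgood : ∀ j, ∀ x ∈ G j, ∀ d : ℕ, a (j + d) x ≤ L * q ^ d * a j x) (F : Finset ℤ) :
    ∫⁻ x, (∑ j ∈ F, a j x) ^ s ∂ν ≤
      C * (L ^ s * (1 - q ^ s)⁻¹) * ∫⁻ x, (⨆ j, a j x) ^ s ∂ν := by
  have ham : ∀ j, Measurable (a j) := fun j => (ha j).mono (𝓕.le j) le_rfl
  calc ∫⁻ x, (∑ j ∈ F, a j x) ^ s ∂ν ≤ ∫⁻ x, ∑ j ∈ F, a j x ^ s ∂ν := by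
        gcongr with x
        exact sum_rpow_le_of_le_one hs hs1 F _
    _ = ∑ j ∈ F, ∫⁻ x, a j x ^ s ∂ν :=
        lintegral_finsetSum _ fun j _ => (ham j).pow_const s
    _ ≤ C * ∫⁻ x, ∑ j ∈ F, (G j).indicator (fun x => a j x ^ s) x ∂ν :=
        sum_lintegral_le_lintegral_sum_indicator (fun j => (ha j).pow_const s) hGm hG F
    _ ≤ C * ∫⁻ x, L ^ s * (1 - q ^ s)⁻¹ * (⨆ j, a j x) ^ s ∂ν := by
        gcongr with x
        exact sum_indicator_rpow_le_of_geometric hs hgood F x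
    _ = C * (L ^ s * (1 - q ^ s)⁻¹) * ∫⁻ x, (⨆ j, a j x) ^ s ∂ν := by
        rw [lintegral_const_mul _ ((Measurable.iSup ham).pow_const s), ← mul_assoc]

theorem lintegral_sum_rpow_le_lintegral_iSup_mul (hs : 1 ≤ s)
    (ha : ∀ j, Measurable[𝓕 j] (a j)) (hGm : ∀ j, MeasurableSet (G j))
    (hG : ∀ j, RetainsMass (𝓕 j) ν C (G j))
    (hgood : ∀ j, ∀ x ∈ G j, ∀ d : ℕ, a (j + d) x ≤ L * q ^ d * a j x) (F : Finset ℤ) :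
    ∫⁻ x, (∑ j ∈ F, a j x) ^ s ∂ν ≤ ENNReal.ofReal s * C * (L * (1 - q)⁻¹) *
      ∫⁻ x, (⨆ j, a j x) * (∑ j ∈ F, a j x) ^ (s - 1) ∂ν := by
  have ham : ∀ j, Measurable (a j) := fun j => (ha j).mono (𝓕.le j) le_rfl
  set b : ℤ → X → ℝ≥0∞ := fun j x => a j x * (∑ i ∈ F with i ≤ j, a i x) ^ (s - 1)
  have hb : ∀ j, Measurable[𝓕 j] (b j) := fun j =>
    (ha j).mul ((Finset.measurable_sum _ fun i hi =>
      (ha i).mono (𝓕.mono (Finset.mem_filter.1 hi).2) le_rfl).pow_const _)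
  calc ∫⁻ x, (∑ j ∈ F, a j x) ^ s ∂ν
      ≤ ∫⁻ x, ENNReal.ofReal s * ∑ j ∈ F, b j x ∂ν := by
        gcongr with x
        exact sum_rpow_le_sum_mul_rpow hs F _
    _ = ENNReal.ofReal s * ∑ j ∈ F, ∫⁻ x, b j x ∂ν := by
        have hbm : ∀ j, Measurable (b j) := fun j => (hb j).mono (𝓕.le j) le_rfl
        rw [lintegral_const_mul _ (Finset.measurable_sum _ fun j _ => hbm j),
          lintegral_finsetSum _ fun j _ => hbm j]
    _ ≤ ENNReal.ofReal s * (C * ∫⁻ x, ∑ j ∈ F, (G j).indicator (b j) x ∂ν) := by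
        gcongr
        exact sum_lintegral_le_lintegral_sum_indicator hb hGm hG F
    _ ≤ ENNReal.ofReal s * (C * ∫⁻ x, L * (1 - q)⁻¹ *
          ((⨆ j, a j x) * (∑ j ∈ F, a j x) ^ (s - 1)) ∂ν) := by
        gcongr with x
        exact sum_indicator_mul_rpow_le_of_geometric hs hgood F x
    _ = ENNReal.ofReal s * C * (L * (1 - q)⁻¹) *
          ∫⁻ x, (⨆ j, a j x) * (∑ j ∈ F, a j x) ^ (s - 1) ∂ν := by
        rw [lintegral_const_mul _ (by fun_prop)]
        ring

theorem lintegral_sum_rpow_le_card_rpow_mul {ι : Type*} (hs : 0 < s) (F : Finset ι)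
    (a : ι → X → ℝ≥0∞) :
    ∫⁻ x, (∑ j ∈ F, a j x) ^ s ∂ν ≤ (F.card : ℝ≥0∞) ^ s * ∫⁻ x, (⨆ j, a j x) ^ s ∂ν := by
  rw [← lintegral_const_mul' _ _ (by finiteness)]
  gcongr with x
  rw [← ENNReal.mul_rpow_of_nonneg _ _ hs.le, ← nsmul_eq_mul]
  gcongr
  exact Finset.sum_le_card_nsmul _ _ _ fun j _ => le_iSup (fun j => a j x) j

theorem lintegral_sum_rpow_le_of_one_lt (hs : 1 < s)
    (ha : ∀ j, Measurable[𝓕 j] (a j)) (hGm : ∀ j, MeasurableSet (G j))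
    (hG : ∀ j, RetainsMass (𝓕 j) ν C (G j))
    (hgood : ∀ j, ∀ x ∈ G j, ∀ d : ℕ, a (j + d) x ≤ L * q ^ d * a j x) (F : Finset ℤ)
    (hfin : ∫⁻ x, (⨆ j, a j x) ^ s ∂ν ≠ ⊤) :
    ∫⁻ x, (∑ j ∈ F, a j x) ^ s ∂ν ≤
      (ENNReal.ofReal s * C * (L * (1 - q)⁻¹)) ^ s * ∫⁻ x, (⨆ j, a j x) ^ s ∂ν := by
  have hs0 : 0 < s := by linarith
  have hs1 : 0 < s - 1 := by linarith
  have ham : ∀ j, Measurable (a j) := fun j => (ha j).mono (𝓕.le j) le_rfl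
  have hsum_ne_top : ∫⁻ x, (∑ j ∈ F, a j x) ^ s ∂ν ≠ ⊤ :=
    ne_top_of_le_ne_top (ENNReal.mul_ne_top (by finiteness) hfin)
      (lintegral_sum_rpow_le_card_rpow_mul hs0 F a)
  refine le_rpow_mul_of_le_mul_rpow_mul_rpow hs hsum_ne_top
    ((lintegral_sum_rpow_le_lintegral_iSup_mul hs.le ha hGm hG hgood F).trans ?_)
  gcongr
  have hholder := ENNReal.lintegral_mul_le_Lp_mul_Lq ν (Real.HolderConjugate.conjExponent hs)
    (Measurable.iSup ham).aemeasurable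
    ((Finset.measurable_sum F fun j _ => ham j).pow_const (s - 1)).aemeasurable
  have hexp : (s - 1) * (s / (s - 1)) = s := mul_div_cancel₀ _ hs1.ne'
  simpa only [Pi.mul_apply, ← ENNReal.rpow_mul, hexp, one_div, Real.conjExponent, inv_div]
    using hholder

theorem lintegral_tsum_rpow_le_of_forall_finset {ι : Type*} [Countable ι] {a : ι → X → ℝ≥0∞}
    (hs : 0 < s) (ha : ∀ j, Measurable (a j)) {K : ℝ≥0∞}
    (h : ∀ F : Finset ι, ∫⁻ x, (∑ j ∈ F, a j x) ^ s ∂ν ≤ K) :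
    ∫⁻ x, (∑' j, a j x) ^ s ∂ν ≤ K := by
  have hsup : ∀ x, (∑' j, a j x) ^ s = ⨆ F : Finset ι, (∑ j ∈ F, a j x) ^ s := fun x => by
    rw [ENNReal.tsum_eq_iSup_sum]
    exact (ENNReal.orderIsoRpow s hs).map_iSup _
  simp only [hsup]
  rw [lintegral_iSup_directed
    (fun F => ((Finset.measurable_sum F fun j _ => ha j).pow_const s).aemeasurable)]
  · exact iSup_le h
  · refine Monotone.directed_le fun F F' hFF' x => ?_
    dsimp only
    gcongr

theorem exists_lintegral_tsum_rpow_le_mul_lintegral_iSup_rpow (hs : 0 < s) (hC : C ≠ ⊤)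
    (hL : L ≠ ⊤) (hq : q < 1) (𝓕 : Filtration ℤ mX) (ν : Measure X) :
    ∃ K < ⊤, ∀ (a : ℤ → X → ℝ≥0∞) (G : ℤ → Set X), (∀ j, Measurable[𝓕 j] (a j)) →
      (∀ j, MeasurableSet (G j)) → (∀ j, RetainsMass (𝓕 j) ν C (G j)) →
      (∀ j, ∀ x ∈ G j, ∀ d : ℕ, a (j + d) x ≤ L * q ^ d * a j x) →
      ∫⁻ x, (∑' j, a j x) ^ s ∂ν ≤ K * ∫⁻ x, (⨆ j, a j x) ^ s ∂ν := by
  have hfinite : ∀ r : ℝ≥0∞, r < 1 → (1 - r)⁻¹ ≠ ⊤ := fun r hr =>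
    ENNReal.inv_ne_top.2 (tsub_pos_of_lt hr).ne'
  rcases le_or_gt s 1 with hs1 | hs1
  · refine ⟨C * (L ^ s * (1 - q ^ s)⁻¹), ?_, fun a G ha hGm hG hgood =>
      lintegral_tsum_rpow_le_of_forall_finset hs (fun j => (ha j).mono (𝓕.le j) le_rfl)
        (lintegral_sum_rpow_le_of_le_one hs hs1 ha hGm hG hgood)⟩
    have := hfinite (q ^ s) (ENNReal.rpow_lt_one hq hs)
    finiteness
  · refine ⟨(ENNReal.ofReal s * C * (L * (1 - q)⁻¹)) ^ s + 1, ?_, fun a G ha hGm hG hgood => ?_⟩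
    · have := hfinite q hq
      finiteness
    rcases eq_or_ne (∫⁻ x, (⨆ j, a j x) ^ s ∂ν) ⊤ with htop | hfin
    · rw [htop, ENNReal.mul_top (by simp)]
      exact le_top
    refine lintegral_tsum_rpow_le_of_forall_finset hs (fun j => (ha j).mono (𝓕.le j) le_rfl)
      fun F => (lintegral_sum_rpow_le_of_one_lt hs1 ha hGm hG hgood F hfin).trans ?_
    gcongr
    exact le_self_add

end Filtration

/-! ### Exceptional sets from Markov's inequality -/

section Markov

variable {X : Type*} {mX : MeasurableSpace X} {μ : Measure X}

theorem measure_lt_le_of_lintegral_le_mul {b : X → ℝ≥0∞} (hb : AEMeasurable b μ) {t c : ℝ≥0∞}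
    (h : ∫⁻ x, b x ∂μ ≤ t * c) : μ {x | t < b x} ≤ c := by
  rcases eq_or_ne t ⊤ with rfl | ht
  · simp
  rcases eq_or_ne t 0 with rfl | ht0
  · rw [zero_mul, nonpos_iff_eq_zero, lintegral_eq_zero_iff' hb] at h
    exact (measure_mono_null (fun x (hx : 0 < b x) => hx.ne') h).trans_le zero_le
  calc μ {x | t < b x} ≤ μ {x | t ≤ b x} := measure_mono fun x (hx : t < b x) => hx.le
    _ ≤ (∫⁻ x, b x ∂μ) / t := meas_ge_le_lintegral_div hb ht0 ht
    _ ≤ c := ENNReal.div_le_of_le_mul' h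

theorem measure_le_two_mul_measure_inter_forall_le {P : Set X} (hP : μ P ≠ ⊤)
    {b : ℕ → X → ℝ≥0∞} (hb : ∀ d, Measurable (b d)) {t ε : ℕ → ℝ≥0∞} (hε : ∑' d, ε d ≤ 2⁻¹)
    (h : ∀ d, ∫⁻ x in P, b d x ∂μ ≤ t d * (ε d * μ P)) :
    μ P ≤ 2 * μ (P ∩ {x | ∀ d, b d x ≤ t d}) := by
  set Bad : Set X := ⋃ d, P ∩ {x | t d < b d x}
  have hbad : μ Bad ≤ 2⁻¹ * μ P :=
    calc μ Bad ≤ ∑' d, μ (P ∩ {x | t d < b d x}) := measure_iUnion_le _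
      _ ≤ ∑' d, ε d * μ P := by
          gcongr with d
          rw [inter_comm, ← Measure.restrict_apply (measurableSet_lt measurable_const (hb d))]
          exact measure_lt_le_of_lintegral_le_mul (hb d).aemeasurable (h d)
      _ ≤ 2⁻¹ * μ P := by
          rw [ENNReal.tsum_mul_right]
          gcongr
  have hcover : P ⊆ P ∩ {x | ∀ d, b d x ≤ t d} ∪ Bad := fun x hx => by
    by_cases hgood : ∀ d, b d x ≤ t d
    · exact .inl ⟨hx, hgood⟩
    · push Not at hgood
      exact .inr (mem_iUnion.2 (hgood.imp fun d hd => ⟨hx, hd⟩))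
  have hhalf : 2⁻¹ * μ P + 2⁻¹ * μ P ≤ μ (P ∩ {x | ∀ d, b d x ≤ t d}) + 2⁻¹ * μ P :=
    calc 2⁻¹ * μ P + 2⁻¹ * μ P = μ P := by rw [← add_mul, ENNReal.inv_two_add_inv_two, one_mul]
      _ ≤ μ (P ∩ {x | ∀ d, b d x ≤ t d}) + μ Bad :=
          (measure_mono hcover).trans (measure_union_le _ _)
      _ ≤ μ (P ∩ {x | ∀ d, b d x ≤ t d}) + 2⁻¹ * μ P := by gcongr
  rw [ENNReal.add_le_add_iff_right (by finiteness), ENNReal.inv_mul_le_iff (by simp) (by simp)]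
    at hhalf
  exact hhalf

theorem measure_le_two_mul_measure_inter_forall_le_geometric {P : Set X} (hP : μ P ≠ ⊤)
    {b : ℕ → X → ℝ≥0∞} (hb : ∀ d, Measurable (b d)) {A c ρ : ℝ≥0∞} (hρ : ρ < 1)
    (h : ∀ d, ∫⁻ x in P, b d x ∂μ ≤ A * (ρ ^ 2) ^ d * c * μ P) :
    μ P ≤ 2 * μ (P ∩ {x | ∀ d, b d x ≤ 2 * A * (1 - ρ)⁻¹ * ρ ^ d * c}) := by
  have hρ0 : 1 - ρ ≠ 0 := (tsub_pos_of_lt hρ).ne'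
  have hρ1 : 1 - ρ ≠ ⊤ := by finiteness
  refine measure_le_two_mul_measure_inter_forall_le (ε := fun d => 2⁻¹ * (1 - ρ) * ρ ^ d)
    hP hb ?_ fun d => (h d).trans_eq ?_
  · rw [ENNReal.tsum_mul_left, ENNReal.tsum_geometric, mul_assoc, ENNReal.mul_inv_cancel hρ0 hρ1,
      mul_one]
  · calc A * (ρ ^ 2) ^ d * c * μ P
        = (2 * 2⁻¹) * ((1 - ρ) * (1 - ρ)⁻¹) * (A * (ρ ^ d * ρ ^ d) * c * μ P) := by
          rw [ENNReal.mul_inv_cancel (by simp) (by simp), ENNReal.mul_inv_cancel hρ0 hρ1]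
          ring
      _ = 2 * A * (1 - ρ)⁻¹ * ρ ^ d * c * (2⁻¹ * (1 - ρ) * ρ ^ d * μ P) := by ring

end Markov

/-! ### Dyadic cubes -/

theorem RetainsMass.of_forall_fiber {X ι : Type*} {mX : MeasurableSpace X} [Countable ι]
    {idx : X → ι} (hidx : Measurable[mX, ⊤] idx) {ν : Measure X} {C : ℝ≥0∞} {G : Set X}
    (h : ∀ x, ν (idx ⁻¹' {idx x}) ≤ C * ν (idx ⁻¹' {idx x} ∩ G)) :
    RetainsMass (MeasurableSpace.comap idx ⊤) ν C G := by
  rintro _ ⟨B, -, rfl⟩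
  have hfiber : ∀ z, MeasurableSet (idx ⁻¹' {z}) := fun z => hidx trivial
  have hfiber_le : ∀ z, ν (idx ⁻¹' {z}) ≤ C * ν (idx ⁻¹' {z} ∩ G) := fun z => by
    rcases (idx ⁻¹' {z}).eq_empty_or_nonempty with hz | ⟨x, rfl⟩
    · simp [hz]
    · exact h x
  calc ν (idx ⁻¹' B) = ∑' z : B, ν (idx ⁻¹' {↑z}) :=
        (tsum_measure_preimage_singleton B.to_countable fun z _ => hfiber z).symm
    _ ≤ ∑' z : B, C * ν.restrict G (idx ⁻¹' {↑z}) := by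
        gcongr with z
        rw [Measure.restrict_apply (hfiber z)]
        exact hfiber_le z
    _ = C * ν.restrict G (idx ⁻¹' B) := by
        rw [ENNReal.tsum_mul_left,
          tsum_measure_preimage_singleton B.to_countable fun z _ => hfiber z]
    _ = C * ν (idx ⁻¹' B ∩ G) := by
        rw [Measure.restrict_apply (hidx trivial)]

section Cubes

variable {n : ℕ}

theorem volume_forall_mem (s : Fin n → Set ℝ) :
    volume {x : ESp n | ∀ i, x i ∈ s i} = ∏ i, volume (s i) := by
  rw [← volume_pi_pi, ← (EuclideanSpace.volume_preserving_symm_measurableEquiv_toLp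
    (Fin n)).measure_preimage_equiv]
  congr 1 with x
  simp [Set.mem_pi]

theorem IsCube.volume_ne_zero {Q : Set (ESp n)} (hQ : IsCube Q) : volume Q ≠ 0 := by
  obtain ⟨c, h, hh, rfl⟩ := hQ
  simp_rw [← Set.mem_Icc, volume_forall_mem, Real.volume_Icc, add_sub_cancel_left]
  simp [hh]

theorem IsCube.volume_ne_top {Q : Set (ESp n)} (hQ : IsCube Q) : volume Q ≠ ⊤ := by
  obtain ⟨c, h, -, rfl⟩ := hQ
  simp_rw [← Set.mem_Icc, volume_forall_mem, Real.volume_Icc]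
  exact ENNReal.prod_ne_top fun i _ => ENNReal.ofReal_ne_top

/-- The half-open cube with lower corner `c` and side length `h`; half-open cubes, unlike those of
`IsCube`, tile the space. -/
def icoCube (c : Fin n → ℝ) (h : ℝ) : Set (ESp n) :=
  {x | ∀ i, x i ∈ Ico (c i) (c i + h)}

theorem volume_icoCube (c : Fin n → ℝ) (h : ℝ) : volume (icoCube c h) = ENNReal.ofReal h ^ n := by
  simp [icoCube, volume_forall_mem, -mem_Ico]

theorem measurableSet_icoCube (c : Fin n → ℝ) (h : ℝ) : MeasurableSet (icoCube c h) := by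
  simp only [icoCube, ofPred_forall]
  exact MeasurableSet.iInter fun i => measurableSet_Ico.preimage (by fun_prop)

theorem exists_isCube_icoCube_subset (c : Fin n → ℝ) {h : ℝ} (hh : 0 < h) :
    ∃ Q, IsCube Q ∧ icoCube c h ⊆ Q ∧ volume Q = volume (icoCube c h) := by
  refine ⟨{x | ∀ i, c i ≤ x i ∧ x i ≤ c i + h}, ⟨c, h, hh, rfl⟩,
    fun x hx i => ⟨(hx i).1, (hx i).2.le⟩, ?_⟩
  simp_rw [volume_icoCube, ← Set.mem_Icc, volume_forall_mem, Real.volume_Icc, add_sub_cancel_left]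
  simp

end Cubes

/-- The side length `2^{-j}` of the dyadic cubes of generation `j`. -/
def dyadicSide (j : ℤ) : ℝ := 2 ^ (-j)

theorem dyadicSide_pos (j : ℤ) : 0 < dyadicSide j := by
  unfold dyadicSide
  positivity

theorem dyadicSide_add (j : ℤ) (d : ℕ) : dyadicSide (j + d) = dyadicSide j / 2 ^ d := by
  rw [dyadicSide, dyadicSide, neg_add, zpow_add₀ two_ne_zero, zpow_neg (2 : ℝ) d, zpow_natCast,
    div_eq_mul_inv]

section Dyadic

variable {n : ℕ} {j : ℤ}

/-- The index of the dyadic cube of generation `j` which contains `x`; the dyadic cubes of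
generation `j` are the fibres of this map. -/
def dyadicIndex (j : ℤ) (x : ESp n) : Fin n → ℤ := fun i => ⌊x i / dyadicSide j⌋

theorem dyadicIndex_eq_ediv (j : ℤ) (d : ℕ) (x : ESp n) (i : Fin n) :
    dyadicIndex j x i = dyadicIndex (j + d) x i / 2 ^ d := by
  have h := Int.floor_div_natCast (x i / dyadicSide (j + d)) (2 ^ d)
  push_cast at h
  rw [dyadicIndex, dyadicIndex, ← h, dyadicSide_add]
  congr 1
  field_simp

theorem measurable_dyadicIndex (j : ℤ) : Measurable[_, ⊤] (dyadicIndex (n := n) j) := by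
  have h : Measurable (dyadicIndex (n := n) j) :=
    measurable_pi_lambda _ fun i => Int.measurable_floor.comp (by fun_prop)
  exact h.mono le_rfl fun s _ => DiscreteMeasurableSpace.forall_measurableSet s

theorem dyadicIndex_preimage_eq_icoCube (j : ℤ) (k : Fin n → ℤ) :
    dyadicIndex (n := n) j ⁻¹' {k} = icoCube (fun i => k i * dyadicSide j) (dyadicSide j) := by
  ext x
  simp only [mem_preimage, mem_singleton_iff, funext_iff, dyadicIndex, Int.floor_eq_iff, icoCube,
    mem_ofPred_eq, mem_Ico, le_div_iff₀ (dyadicSide_pos j), div_lt_iff₀ (dyadicSide_pos j),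
    add_one_mul]

/-- The filtration generated by the dyadic cubes; generation `j` consists of the cubes of side
`2^{-j}`. -/
def dyadicFiltration (n : ℕ) : Filtration ℤ (inferInstance : MeasurableSpace (ESp n)) where
  seq j := MeasurableSpace.comap (dyadicIndex j) ⊤
  mono' j k hjk := by
    obtain ⟨d, rfl⟩ := Int.le.dest hjk
    have hcomp : dyadicIndex (n := n) j = (fun z i => z i / 2 ^ d) ∘ dyadicIndex (j + d) :=
      funext₂ (dyadicIndex_eq_ediv j d)
    dsimp only
    rw [hcomp, ← MeasurableSpace.comap_comp]
    exact MeasurableSpace.comap_mono le_top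
  le' j := (measurable_dyadicIndex j).comap_le

/-- The union of the dyadic cubes of generation `j` that touch the one containing `x`: the
concentric triple of that cube. -/
def dyadicNhd (j : ℤ) (x : ESp n) : Set (ESp n) :=
  {y | ∀ i, |dyadicIndex j y i - dyadicIndex j x i| ≤ 1}

theorem dyadicNhd_eq_icoCube (j : ℤ) (x : ESp n) :
    dyadicNhd j x =
      icoCube (fun i => (dyadicIndex j x i - 1) * dyadicSide j) (3 * dyadicSide j) := by
  ext y
  refine forall_congr' fun i => ?_
  set k := dyadicIndex j x i
  have hlow : k - 1 ≤ dyadicIndex j y i ↔ (k - 1) * dyadicSide j ≤ y i := by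
    rw [dyadicIndex, Int.le_floor, le_div_iff₀ (dyadicSide_pos j)]
    push_cast
    rfl
  have hup : dyadicIndex j y i < k + 2 ↔ y i < (k + 2) * dyadicSide j := by
    rw [dyadicIndex, Int.floor_lt, div_lt_iff₀ (dyadicSide_pos j)]
    push_cast
    rfl
  rw [mem_Ico, ← hlow, show (k - 1) * dyadicSide j + 3 * dyadicSide j = (k + 2) * dyadicSide j by
    ring, ← hup, abs_le]
  omega

theorem mem_dyadicNhd_comm {x y : ESp n} : y ∈ dyadicNhd j x ↔ x ∈ dyadicNhd j y :=
  forall_congr' fun i => by rw [abs_sub_comm]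

theorem mem_dyadicNhd_self (j : ℤ) (x : ESp n) : x ∈ dyadicNhd j x := fun i => by simp

theorem mem_dyadicNhd_of_forall_abs_sub_le {x y : ESp n} (h : ∀ i, |y i - x i| ≤ dyadicSide j) :
    y ∈ dyadicNhd j x := fun i => by
  have hdiv : |y i / dyadicSide j - x i / dyadicSide j| ≤ 1 := by
    rw [← sub_div, abs_div, abs_of_pos (dyadicSide_pos j), div_le_one (dyadicSide_pos j)]
    exact h i
  rw [abs_le] at hdiv ⊢
  simp only [dyadicIndex]
  constructor
  · have : ⌊x i / dyadicSide j⌋ ≤ ⌊y i / dyadicSide j + 1⌋ := Int.floor_le_floor (by linarith)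
    rw [Int.floor_add_one] at this
    linarith
  · have : ⌊y i / dyadicSide j⌋ ≤ ⌊x i / dyadicSide j + 1⌋ := Int.floor_le_floor (by linarith)
    rw [Int.floor_add_one] at this
    linarith

theorem dyadicNhd_add_subset (j : ℤ) (d : ℕ) (x : ESp n) :
    dyadicNhd (j + d) x ⊆ dyadicNhd j x := fun y hy i => by
  have hdiv : ∀ a b : ℤ, a ≤ b + 1 → a / 2 ^ d ≤ b / 2 ^ d + 1 := fun a b hab => by
    have hpow : (0 : ℤ) < 2 ^ d := by positivity
    rw [← Int.add_mul_ediv_right b 1 hpow.ne']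
    exact Int.ediv_le_ediv hpow (by linarith)
  have h := hy i
  rw [abs_le] at h ⊢
  rw [dyadicIndex_eq_ediv j d, dyadicIndex_eq_ediv j d]
  have h₁ := hdiv (dyadicIndex (j + d) y i) (dyadicIndex (j + d) x i) (by linarith)
  have h₂ := hdiv (dyadicIndex (j + d) x i) (dyadicIndex (j + d) y i) (by linarith)
  constructor <;> linarith

theorem dyadicNhd_congr {x x' : ESp n} (h : dyadicIndex j x = dyadicIndex j x') :
    dyadicNhd j x = dyadicNhd j x' := by
  simp only [dyadicNhd, h]

theorem volume_dyadicNhd (j : ℤ) (x : ESp n) :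
    volume (dyadicNhd j x) = ENNReal.ofReal (3 * dyadicSide j) ^ n := by
  rw [dyadicNhd_eq_icoCube, volume_icoCube]

theorem measurableSet_dyadicNhd (j : ℤ) (x : ESp n) : MeasurableSet (dyadicNhd j x) := by
  rw [dyadicNhd_eq_icoCube]
  exact measurableSet_icoCube _ _

theorem measurableSet_mem_dyadicNhd (j : ℤ) :
    MeasurableSet {p : ESp n × ESp n | p.2 ∈ dyadicNhd j p.1} := by
  have hidx : Measurable (dyadicIndex (n := n) j) :=
    (measurable_dyadicIndex j).mono le_rfl le_top
  exact ((hidx.comp measurable_fst).prodMk (hidx.comp measurable_snd))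
    (MeasurableSet.of_discrete (s := {q | ∀ i, |q.2 i - q.1 i| ≤ 1}))

end Dyadic

/-! ### Decay of the averages across scales -/

section Averages

variable {n m : ℕ} {j : ℤ}

/-- The mean of `g` over `dyadicNhd j x`, normalised by the volume of the dyadic cube of generation
`j` (and not by that of its triple). -/
def nhdAverage (j : ℤ) (g : ESp n → ℝ≥0∞) (x : ESp n) : ℝ≥0∞ :=
  (ENNReal.ofReal (dyadicSide j) ^ n)⁻¹ * ∫⁻ y in dyadicNhd j x, g y

theorem measurable_nhdAverage (j : ℤ) (g : ESp n → ℝ≥0∞) :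
    Measurable[dyadicFiltration n j] (nhdAverage j g) := by
  have hφ : Measurable[⊤] fun k : Fin n → ℤ => (ENNReal.ofReal (dyadicSide j) ^ n)⁻¹ *
      ∫⁻ y in {y | ∀ i, |dyadicIndex j y i - k i| ≤ 1}, g y := measurable_from_top
  exact hφ.comp (comap_measurable _)

theorem nhdAverage_congr {x x' : ESp n} (h : dyadicIndex j x = dyadicIndex j x')
    (g : ESp n → ℝ≥0∞) : nhdAverage j g x = nhdAverage j g x' := by
  rw [nhdAverage, nhdAverage, dyadicNhd_congr h]

theorem setLIntegral_setLIntegral_dyadicNhd_le {g : ESp n → ℝ≥0∞} (hg : Measurable g) (j : ℤ)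
    (d : ℕ) (x₀ : ESp n) :
    ∫⁻ x in dyadicIndex j ⁻¹' {dyadicIndex j x₀}, ∫⁻ y in dyadicNhd (j + d) x, g y ≤
      ENNReal.ofReal (3 * dyadicSide (j + d)) ^ n * ∫⁻ y in dyadicNhd j x₀, g y := by
  set P : Set (ESp n) := dyadicIndex j ⁻¹' {dyadicIndex j x₀}
  have hP : MeasurableSet P := measurable_dyadicIndex j trivial
  have hmeas : Measurable (Function.uncurry fun x y => (dyadicNhd (j + d) x).indicator g y) :=
    (hg.comp measurable_snd).indicator (measurableSet_mem_dyadicNhd (j + d))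
  have hinner : ∀ y, ∫⁻ x in P, (dyadicNhd (j + d) x).indicator g y ≤
      (dyadicNhd j x₀).indicator
        (fun y => ENNReal.ofReal (3 * dyadicSide (j + d)) ^ n * g y) y := fun y => by
    by_cases hy : y ∈ dyadicNhd j x₀
    · calc ∫⁻ x in P, (dyadicNhd (j + d) x).indicator g y
          ≤ ∫⁻ x, (dyadicNhd (j + d) x).indicator g y := setLIntegral_le_lintegral _ _
        _ = ∫⁻ x, (dyadicNhd (j + d) y).indicator (fun _ => g y) x :=
          lintegral_congr fun x => Set.indicator_eq_indicator mem_dyadicNhd_comm rfl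
        _ = _ := by
          rw [lintegral_indicator_const (measurableSet_dyadicNhd _ _), volume_dyadicNhd,
            Set.indicator_of_mem hy, mul_comm]
    · have hzero : ∀ x ∈ P, (dyadicNhd (j + d) x).indicator g y = 0 := fun x hx =>
        Set.indicator_of_notMem (fun hyx => hy <|
          dyadicNhd_congr (mem_singleton_iff.1 hx) ▸ dyadicNhd_add_subset j d x hyx) g
      rw [setLIntegral_congr_fun hP hzero, lintegral_zero]
      exact zero_le
  calc ∫⁻ x in P, ∫⁻ y in dyadicNhd (j + d) x, g y
      = ∫⁻ x in P, ∫⁻ y, (dyadicNhd (j + d) x).indicator g y := by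
        simp only [lintegral_indicator (measurableSet_dyadicNhd _ _)]
    _ = ∫⁻ y, ∫⁻ x in P, (dyadicNhd (j + d) x).indicator g y :=
        lintegral_lintegral_swap hmeas.aemeasurable
    _ ≤ ∫⁻ y, (dyadicNhd j x₀).indicator
          (fun y => ENNReal.ofReal (3 * dyadicSide (j + d)) ^ n * g y) y := lintegral_mono hinner
    _ = _ := by
        rw [lintegral_indicator (measurableSet_dyadicNhd _ _), lintegral_const_mul _ hg]

theorem volume_dyadicIndex_preimage (j : ℤ) (k : Fin n → ℤ) :
    volume (dyadicIndex (n := n) j ⁻¹' {k}) = ENNReal.ofReal (dyadicSide j) ^ n := by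
  rw [dyadicIndex_preimage_eq_icoCube, volume_icoCube]

theorem setLIntegral_nhdAverage_add_le {g : ESp n → ℝ≥0∞} (hg : Measurable g) (j : ℤ) (d : ℕ)
    (x₀ : ESp n) :
    ∫⁻ x in dyadicIndex j ⁻¹' {dyadicIndex j x₀}, nhdAverage (j + d) g x ≤
      3 ^ n * volume (dyadicIndex j ⁻¹' {dyadicIndex j x₀}) * nhdAverage j g x₀ := by
  have hcancel : ∀ k,
      ENNReal.ofReal (dyadicSide k) ^ n * (ENNReal.ofReal (dyadicSide k) ^ n)⁻¹ = 1 :=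
    fun k => ENNReal.mul_inv_cancel (by simp [dyadicSide_pos]) (by finiteness)
  calc ∫⁻ x in dyadicIndex j ⁻¹' {dyadicIndex j x₀}, nhdAverage (j + d) g x
      = (ENNReal.ofReal (dyadicSide (j + d)) ^ n)⁻¹ *
          ∫⁻ x in dyadicIndex j ⁻¹' {dyadicIndex j x₀}, ∫⁻ y in dyadicNhd (j + d) x, g y :=
        lintegral_const_mul' _ _ (by simp [dyadicSide_pos])
    _ ≤ (ENNReal.ofReal (dyadicSide (j + d)) ^ n)⁻¹ *
          (ENNReal.ofReal (3 * dyadicSide (j + d)) ^ n * ∫⁻ y in dyadicNhd j x₀, g y) := by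
        gcongr
        exact setLIntegral_setLIntegral_dyadicNhd_le hg j d x₀
    _ = ENNReal.ofReal (dyadicSide (j + d)) ^ n * (ENNReal.ofReal (dyadicSide (j + d)) ^ n)⁻¹ *
          (3 ^ n * ∫⁻ y in dyadicNhd j x₀, g y) := by
        rw [ENNReal.ofReal_mul zero_le_three, mul_pow, ENNReal.ofReal_ofNat]
        ring
    _ = ENNReal.ofReal (dyadicSide j) ^ n * (ENNReal.ofReal (dyadicSide j) ^ n)⁻¹ *
          (3 ^ n * ∫⁻ y in dyadicNhd j x₀, g y) := by
        rw [hcancel, hcancel]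
    _ = _ := by
        rw [volume_dyadicIndex_preimage, nhdAverage]
        ring

/-- The contribution `2^{-jα} ∏ₗ ⟨gₗ⟩` of the scale `2^{-j}` around `x` to the multilinear
fractional integral, `⟨gₗ⟩` being the mean of `gₗ` over `dyadicNhd j x`. -/
def fracAverage (α : ℝ) (g : Fin m → ESp n → ℝ≥0∞) (j : ℤ) (x : ESp n) : ℝ≥0∞ :=
  ENNReal.ofReal (dyadicSide j) ^ α * ∏ l, nhdAverage j (g l) x

theorem measurable_fracAverage (α : ℝ) (g : Fin m → ESp n → ℝ≥0∞) (j : ℤ) :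
    Measurable[dyadicFiltration n j] (fracAverage α g j) :=
  (Finset.measurable_prod _ fun l _ => measurable_nhdAverage j (g l)).const_mul _

theorem fracAverage_congr {x x' : ESp n} (h : dyadicIndex j x = dyadicIndex j x') (α : ℝ)
    (g : Fin m → ESp n → ℝ≥0∞) : fracAverage α g j x = fracAverage α g j x' := by
  simp only [fracAverage, nhdAverage_congr h]

theorem ofReal_dyadicSide_add_rpow (j : ℤ) (d : ℕ) (β : ℝ) :
    ENNReal.ofReal (dyadicSide (j + d)) ^ β =
      (2 ^ (-β)) ^ d * ENNReal.ofReal (dyadicSide j) ^ β := by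
  have hpow : ENNReal.ofReal (2 ^ d)⁻¹ = (2 ^ d)⁻¹ := by
    rw [ENNReal.ofReal_inv_of_pos (by positivity), ENNReal.ofReal_pow zero_le_two,
      ENNReal.ofReal_ofNat]
  rw [dyadicSide_add, div_eq_inv_mul, ENNReal.ofReal_mul (by positivity),
    ENNReal.mul_rpow_of_ne_top (by finiteness) (by finiteness), hpow, ENNReal.inv_rpow,
    ← ENNReal.rpow_neg, ← ENNReal.rpow_natCast_mul, ← ENNReal.rpow_mul_natCast,
    mul_comm (d : ℝ)]

theorem setLIntegral_fracAverage_add_rpow_le (hm : 0 < m) (α : ℝ) {g : Fin m → ESp n → ℝ≥0∞}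
    (hg : ∀ l, Measurable (g l)) (j : ℤ) (d : ℕ) (x₀ : ESp n) :
    ∫⁻ x in dyadicIndex j ⁻¹' {dyadicIndex j x₀}, fracAverage α g (j + d) x ^ (m⁻¹ : ℝ) ≤
      3 ^ n * (2 ^ (-(α / m))) ^ d * fracAverage α g j x₀ ^ (m⁻¹ : ℝ) *
        volume (dyadicIndex j ⁻¹' {dyadicIndex j x₀}) := by
  set P : Set (ESp n) := dyadicIndex j ⁻¹' {dyadicIndex j x₀}
  have hm' : (0 : ℝ) < m := by exact_mod_cast hm
  have hroot : ∀ k x, fracAverage α g k x ^ (m⁻¹ : ℝ) =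
      ENNReal.ofReal (dyadicSide k) ^ (α / m) * ∏ l, nhdAverage k (g l) x ^ (m⁻¹ : ℝ) := by
    intro k x
    rw [fracAverage, ENNReal.mul_rpow_of_nonneg _ _ (by positivity), ← ENNReal.rpow_mul,
      ENNReal.prod_rpow_of_nonneg (by positivity), ← div_eq_mul_inv]
  have hholder : ∫⁻ x in P, ∏ l, nhdAverage (j + d) (g l) x ^ (m⁻¹ : ℝ) ≤
      ∏ l, (∫⁻ x in P, nhdAverage (j + d) (g l) x) ^ (m⁻¹ : ℝ) :=
    ENNReal.lintegral_prod_norm_pow_le _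
      (fun l _ =>
        ((measurable_nhdAverage _ _).mono ((dyadicFiltration n).le _) le_rfl).aemeasurable)
      (by simp [hm'.ne']) fun l _ => by positivity
  simp only [hroot, ofReal_dyadicSide_add_rpow]
  calc ∫⁻ x in P, (2 ^ (-(α / m))) ^ d * ENNReal.ofReal (dyadicSide j) ^ (α / m) *
        ∏ l, nhdAverage (j + d) (g l) x ^ (m⁻¹ : ℝ)
      = (2 ^ (-(α / m))) ^ d * ENNReal.ofReal (dyadicSide j) ^ (α / m) *
        ∫⁻ x in P, ∏ l, nhdAverage (j + d) (g l) x ^ (m⁻¹ : ℝ) := by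
        refine lintegral_const_mul _ (Finset.measurable_prod _ fun l _ => ?_)
        exact ((measurable_nhdAverage _ _).mono ((dyadicFiltration n).le _) le_rfl).pow_const _
    _ ≤ (2 ^ (-(α / m))) ^ d * ENNReal.ofReal (dyadicSide j) ^ (α / m) *
        ∏ l : Fin m, (3 ^ n * volume P * nhdAverage j (g l) x₀) ^ (m⁻¹ : ℝ) := by
        gcongr
        refine hholder.trans ?_
        gcongr with l
        exact setLIntegral_nhdAverage_add_le (hg l) j d x₀
    _ = _ := by
        simp_rw [ENNReal.mul_rpow_of_nonneg _ _ (inv_nonneg.2 hm'.le),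
          Finset.prod_mul_distrib, Finset.prod_const, Finset.card_univ, Fintype.card_fin,
          ENNReal.rpow_inv_natCast_pow hm.ne']
        ring

/-- The points at which the averages of all finer scales are dominated by the one of generation `j`,
with a geometric gain `q ^ d`. -/
def decaySet (α : ℝ) (L q : ℝ≥0∞) (g : Fin m → ESp n → ℝ≥0∞) (j : ℤ) : Set (ESp n) :=
  {x | ∀ d : ℕ, fracAverage α g (j + d) x ≤ L * q ^ d * fracAverage α g j x}

theorem measurableSet_decaySet (α : ℝ) (L q : ℝ≥0∞) (g : Fin m → ESp n → ℝ≥0∞) (j : ℤ) :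
    MeasurableSet (decaySet α L q g j) := by
  have hmeas : ∀ k, Measurable (fracAverage α g k) := fun k =>
    (measurable_fracAverage α g k).mono ((dyadicFiltration n).le k) le_rfl
  simp only [decaySet, ofPred_forall]
  exact MeasurableSet.iInter fun d => measurableSet_le (hmeas _) ((hmeas j).const_mul _)

theorem exists_volume_le_two_mul_volume_inter_decaySet (n : ℕ) (hm : 0 < m) {α : ℝ} (hα : 0 < α) :
    ∃ L < ⊤, ∃ q < 1, ∀ g : Fin m → ESp n → ℝ≥0∞, (∀ l, Measurable (g l)) → ∀ j x₀,
      volume (dyadicIndex j ⁻¹' {dyadicIndex j x₀}) ≤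
        2 * volume (dyadicIndex j ⁻¹' {dyadicIndex j x₀} ∩ decaySet α L q g j) := by
  have hm' : (0 : ℝ) < m := by exact_mod_cast hm
  set ρ : ℝ≥0∞ := 2 ^ (-(α / m) / 2)
  have hρ : ρ < 1 := ENNReal.rpow_lt_one_of_one_lt_of_neg one_lt_two (by
    have := div_pos hα hm'
    linarith)
  have hρ_sq : ρ ^ 2 = 2 ^ (-(α / m)) := by
    rw [← ENNReal.rpow_mul_natCast]
    congr 1
    push_cast
    ring
  have hρ_inv : (1 - ρ)⁻¹ ≠ ⊤ := ENNReal.inv_ne_top.2 (tsub_pos_of_lt hρ).ne'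
  refine ⟨(2 * 3 ^ n * (1 - ρ)⁻¹) ^ m, by finiteness, ρ ^ m, pow_lt_one₀ zero_le hρ hm.ne',
    fun g hg j x₀ => ?_⟩
  have hmeas : ∀ d : ℕ, Measurable fun x => fracAverage α g (j + d) x ^ (m⁻¹ : ℝ) := fun d =>
    ((measurable_fracAverage α g _).mono ((dyadicFiltration n).le _) le_rfl).pow_const _
  have hvol : volume (dyadicIndex j ⁻¹' {dyadicIndex j x₀}) ≠ ⊤ := by
    rw [volume_dyadicIndex_preimage]
    finiteness
  refine (measure_le_two_mul_measure_inter_forall_le_geometric hvol hmeas hρ fun d =>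
    hρ_sq ▸ setLIntegral_fracAverage_add_rpow_le hm α hg j d x₀).trans ?_
  gcongr 2 * volume ?_
  rintro x ⟨hx, hdecay⟩
  refine ⟨hx, fun d => ?_⟩
  rw [fracAverage_congr (mem_singleton_iff.1 hx)]
  calc fracAverage α g (j + d) x = (fracAverage α g (j + d) x ^ (m⁻¹ : ℝ)) ^ m :=
        (ENNReal.rpow_inv_natCast_pow hm.ne' _).symm
    _ ≤ (2 * 3 ^ n * (1 - ρ)⁻¹ * ρ ^ d * fracAverage α g j x₀ ^ (m⁻¹ : ℝ)) ^ m :=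
        pow_le_pow_left₀ zero_le (hdecay d) m
    _ = (2 * 3 ^ n * (1 - ρ)⁻¹) ^ m * (ρ ^ m) ^ d * fracAverage α g j x₀ := by
        rw [mul_pow, mul_pow, ENNReal.rpow_inv_natCast_pow hm.ne', pow_right_comm]

end Averages

/-! ### Muckenhoupt weights -/

section HalfComparable

variable {n m : ℕ}

/-- `ν` has the half-measure property with constant `C`: a subset which fills half of a cube
carries at least the fraction `C⁻¹` of its `ν`-mass. -/
def IsHalfComparable (ν : Measure (ESp n)) (C : ℝ≥0∞) : Prop :=
  ∀ Q F : Set (ESp n), IsCube Q → F ⊆ Q → volume Q ≤ 2 * volume F → ν Q ≤ C * ν F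

theorem IsHalfComparable.retainsMass {ν : Measure (ESp n)} {C : ℝ≥0∞} (hν : IsHalfComparable ν C)
    {j : ℤ} {G : Set (ESp n)}
    (hG : ∀ x, volume (dyadicIndex j ⁻¹' {dyadicIndex j x}) ≤
      2 * volume (dyadicIndex j ⁻¹' {dyadicIndex j x} ∩ G)) :
    RetainsMass (dyadicFiltration n j) ν C G := by
  refine RetainsMass.of_forall_fiber (measurable_dyadicIndex j) fun x => ?_
  obtain ⟨Q, hQ, hsub, hvol⟩ :=
    exists_isCube_icoCube_subset (fun i => dyadicIndex j x i * dyadicSide j) (dyadicSide_pos j)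
  rw [← dyadicIndex_preimage_eq_icoCube] at hsub hvol
  exact (measure_mono hsub).trans
    (hν Q _ hQ (inter_subset_left.trans hsub) (hvol.trans_le (hG x)))

theorem exists_lintegral_tsum_fracAverage_rpow_le (hm : 0 < m) {α s : ℝ} (hα : 0 < α) (hs : 0 < s)
    {ν : Measure (ESp n)} {C : ℝ≥0∞} (hν : IsHalfComparable ν C) (hC : C ≠ ⊤) :
    ∃ K < ⊤, ∀ g : Fin m → ESp n → ℝ≥0∞, (∀ l, Measurable (g l)) →
      ∫⁻ x, (∑' j, fracAverage α g j x) ^ s ∂ν ≤ K * ∫⁻ x, (⨆ j, fracAverage α g j x) ^ s ∂ν := by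
  obtain ⟨L, hL, q, hq, hdecay⟩ := exists_volume_le_two_mul_volume_inter_decaySet n hm hα
  obtain ⟨K, hK, hle⟩ := exists_lintegral_tsum_rpow_le_mul_lintegral_iSup_rpow hs hC hL.ne hq
    (dyadicFiltration n) ν
  exact ⟨K, hK, fun g hg => hle (fracAverage α g) (decaySet α L q g) (measurable_fracAverage α g)
    (measurableSet_decaySet α L q g) (fun j => hν.retainsMass (hdecay g hg j))
    fun j x hx => hx⟩

end HalfComparable

theorem measure_univ_rpow_le_lintegral_mul_lintegral_rpow {X : Type*} [MeasurableSpace X]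
    {μ : Measure X} {W : X → ℝ≥0∞} (hW : AEMeasurable W μ) (hW₀ : ∀ᵐ x ∂μ, W x ≠ 0)
    (hW_top : ∀ᵐ x ∂μ, W x ≠ ⊤) {p : ℝ} (hp : 1 < p) :
    μ univ ^ p ≤ (∫⁻ x, W x ∂μ) * (∫⁻ x, W x ^ (1 - p / (p - 1)) ∂μ) ^ (p - 1) := by
  have hp₀ : 0 < p := by linarith
  have hp₁ : p - 1 ≠ 0 := by linarith
  have hone : ∫⁻ x, W x ^ (1 / p) * W x ^ (-(1 / p)) ∂μ = μ univ := by
    rw [← lintegral_one]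
    refine lintegral_congr_ae ?_
    filter_upwards [hW₀, hW_top] with x hx₀ hx_top
    rw [← ENNReal.rpow_add _ _ hx₀ hx_top, add_neg_cancel, ENNReal.rpow_zero]
  have hroot : ∀ x, (W x ^ (1 / p)) ^ p = W x := fun x => by
    rw [← ENNReal.rpow_mul, one_div_mul_cancel hp₀.ne', ENNReal.rpow_one]
  have hdual : ∀ x, (W x ^ (-(1 / p))) ^ (p / (p - 1)) = W x ^ (1 - p / (p - 1)) := fun x => by
    rw [← ENNReal.rpow_mul]
    congr 1
    field_simp
    ring
  have hholder := ENNReal.lintegral_mul_le_Lp_mul_Lq μ (Real.HolderConjugate.conjExponent hp)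
    (hW.pow_const (1 / p)) (hW.pow_const (-(1 / p)))
  simp only [Pi.mul_apply, hone, hroot, Real.conjExponent, hdual] at hholder
  calc μ univ ^ p
      ≤ ((∫⁻ x, W x ∂μ) ^ (1 / p) *
          (∫⁻ x, W x ^ (1 - p / (p - 1)) ∂μ) ^ (1 / (p / (p - 1)))) ^ p := by gcongr
    _ = _ := by
        rw [ENNReal.mul_rpow_of_nonneg _ _ hp₀.le, ← ENNReal.rpow_mul, ← ENNReal.rpow_mul,
          one_div_mul_cancel hp₀.ne', ENNReal.rpow_one, one_div_div, div_mul_cancel₀ _ hp₀.ne']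

section Muckenhoupt

variable {n : ℕ} {w : ESp n → ℝ}

theorem IsA1.exists_volume_mul_wMeas_le (hw : IsA1 w) :
    ∃ C < ⊤, ∀ Q F : Set (ESp n), IsCube Q → F ⊆ Q →
      volume F * wMeas w Q ≤ C * (volume Q * wMeas w F) := by
  obtain ⟨C, hC, hA⟩ := hw
  refine ⟨C, hC, fun Q F hQ hFQ => ?_⟩
  set e := essInf (fun x => ENNReal.ofReal (w x)) (volume.restrict Q)
  have hF : e * volume F ≤ wMeas w F := by
    rw [← setLIntegral_const]
    exact lintegral_mono_ae (ae_restrict_of_ae_restrict_of_subset hFQ ae_essInf_le)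
  calc volume F * wMeas w Q
      = volume F * (volume Q * ((volume Q)⁻¹ * wMeas w Q)) := by
        rw [ENNReal.mul_inv_cancel_left hQ.volume_ne_zero hQ.volume_ne_top]
    _ ≤ volume F * (volume Q * (C * e)) := by
        gcongr volume F * (volume Q * ?_)
        exact hA Q hQ
    _ = C * (volume Q * (e * volume F)) := by ring
    _ ≤ C * (volume Q * wMeas w F) := by gcongr

theorem IsAp.exists_volume_rpow_mul_wMeas_le {p : ℝ} (hp : 1 < p) (hw : IsAp w p)
    (hwm : Measurable w) (hw₀ : ∀ᵐ x, 0 < w x) :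
    ∃ C < ⊤, ∀ Q F : Set (ESp n), IsCube Q → F ⊆ Q →
      volume F ^ p * wMeas w Q ≤ C * (volume Q ^ p * wMeas w F) := by
  obtain ⟨C, hC, hA⟩ := hw
  refine ⟨C, hC, fun Q F hQ hFQ => ?_⟩
  set σ := fun E : Set (ESp n) => ∫⁻ x in E, ENNReal.ofReal (w x) ^ (1 - p / (p - 1))
  have hp₁ : 0 < p - 1 := by linarith
  have hpow : volume Q ^ p = volume Q * volume Q ^ (p - 1) := by
    rw [← add_sub_cancel 1 p, ENNReal.rpow_add_of_nonneg _ _ zero_le_one hp₁.le, ENNReal.rpow_one,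
      add_sub_cancel_left]
  have hF : volume F ^ p ≤ wMeas w F * σ F ^ (p - 1) := by
    rw [← Measure.restrict_apply_univ F]
    exact measure_univ_rpow_le_lintegral_mul_lintegral_rpow hwm.ennreal_ofReal.aemeasurable
      (ae_restrict_of_ae (hw₀.mono fun x hx => by simpa using hx)) (by simp) hp
  have hcancel : ∀ t, volume Q * ((volume Q)⁻¹ * t) = t := fun t =>
    ENNReal.mul_inv_cancel_left hQ.volume_ne_zero hQ.volume_ne_top
  have hσQ : σ Q ^ (p - 1) * wMeas w Q ≤ C * volume Q ^ p := by
    calc σ Q ^ (p - 1) * wMeas w Q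
        = (volume Q * ((volume Q)⁻¹ * σ Q)) ^ (p - 1) *
            (volume Q * ((volume Q)⁻¹ * wMeas w Q)) := by rw [hcancel, hcancel]
      _ = ((volume Q)⁻¹ * wMeas w Q) * ((volume Q)⁻¹ * σ Q) ^ (p - 1) * volume Q ^ p := by
          rw [ENNReal.mul_rpow_of_nonneg _ _ hp₁.le, hpow]
          ring
      _ ≤ C * volume Q ^ p := by
          gcongr
          exact hA Q hQ
  calc volume F ^ p * wMeas w Q
      ≤ wMeas w F * σ F ^ (p - 1) * wMeas w Q := by gcongr
    _ ≤ wMeas w F * σ Q ^ (p - 1) * wMeas w Q := by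
        gcongr
        exact lintegral_mono_set hFQ
    _ = wMeas w F * (σ Q ^ (p - 1) * wMeas w Q) := mul_assoc _ _ _
    _ ≤ wMeas w F * (C * volume Q ^ p) := by gcongr
    _ = C * (volume Q ^ p * wMeas w F) := by ring

theorem IsHalfComparable.of_volume_rpow_mul_le {ν : Measure (ESp n)} {C : ℝ≥0∞} {p : ℝ}
    (hp : 0 ≤ p)
    (h : ∀ Q F : Set (ESp n), IsCube Q → F ⊆ Q →
      volume F ^ p * ν Q ≤ C * (volume Q ^ p * ν F)) :
    IsHalfComparable ν (2 ^ p * C) := fun Q F hQ hFQ hvol => by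
  have hQ₀ : volume Q ^ p ≠ 0 := by
    simp [ENNReal.rpow_eq_zero_iff, hQ.volume_ne_zero, hQ.volume_ne_top]
  have hQ_top : volume Q ^ p ≠ ⊤ := ENNReal.rpow_ne_top_of_nonneg hp hQ.volume_ne_top
  refine (ENNReal.mul_le_mul_iff_right hQ₀ hQ_top).1 ?_
  calc volume Q ^ p * ν Q ≤ (2 * volume F) ^ p * ν Q := by gcongr
    _ = 2 ^ p * (volume F ^ p * ν Q) := by rw [ENNReal.mul_rpow_of_nonneg _ _ hp, mul_assoc]
    _ ≤ 2 ^ p * (C * (volume Q ^ p * ν F)) := by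
        gcongr 2 ^ p * ?_
        exact h Q F hQ hFQ
    _ = volume Q ^ p * (2 ^ p * C * ν F) := by ring

theorem IsAinfty.exists_isHalfComparable_withDensity (hA : IsAinfty w) (hw : IsWeight w) :
    ∃ C < ⊤, IsHalfComparable (volume.withDensity fun x => ENNReal.ofReal (w x)) C := by
  have hwMeas : ∀ E, volume.withDensity (fun x => ENNReal.ofReal (w x)) E = wMeas w E :=
    withDensity_apply' _
  obtain ⟨p, hp, C, hC, hle⟩ : ∃ p : ℝ, 0 ≤ p ∧ ∃ C < ⊤, ∀ Q F : Set (ESp n), IsCube Q → F ⊆ Q →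
      volume F ^ p * wMeas w Q ≤ C * (volume Q ^ p * wMeas w F) := by
    rcases hA with hA₁ | ⟨p, hp, hAp⟩
    · exact ⟨1, zero_le_one, by simpa only [ENNReal.rpow_one] using hA₁.exists_volume_mul_wMeas_le⟩
    · exact ⟨p, by linarith, hAp.exists_volume_rpow_mul_wMeas_le hp hw.1 hw.2.2.1⟩
  exact ⟨2 ^ p * C, by finiteness,
    .of_volume_rpow_mul_le hp (by simpa only [hwMeas] using hle)⟩

end Muckenhoupt

/-! ### Fractional integrals and maximal functions -/

theorem lintegral_fin_prod_eq_prod {E : Type*} [MeasurableSpace E] {m : ℕ} (μ : Fin m → Measure E)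
    [∀ i, SigmaFinite (μ i)] {f : Fin m → E → ℝ≥0∞} (hf : ∀ i, Measurable (f i)) :
    ∫⁻ x, ∏ i, f i (x i) ∂Measure.pi μ = ∏ i, ∫⁻ x, f i x ∂μ i := by
  induction m with
  | zero => simp
  | succ m ih =>
    have hprod : Measurable fun x : Fin (m + 1) → E => ∏ i, f i (x i) :=
      Finset.measurable_prod _ fun i _ => (hf i).comp (measurable_pi_apply i)
    rw [← (measurePreserving_piFinSuccAbove μ 0).symm.lintegral_comp hprod]
    simp_rw [MeasurableEquiv.piFinSuccAbove_symm_apply, Fin.insertNthEquiv, Fin.prod_univ_succ,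
      Fin.insertNth_zero, Equiv.coe_fn_mk, Fin.cons_succ, Fin.cons_zero, Fin.zero_succAbove]
    rw [← ih _ fun i => hf _]
    exact lintegral_prod_mul (hf 0).aemeasurable
      (Finset.measurable_prod _ fun i _ => (hf _).comp (measurable_pi_apply i)).aemeasurable

section Pointwise

variable {n m : ℕ}

theorem exists_dyadicSide_add_one_lt_le {r : ℝ} (hr : 0 < r) :
    ∃ j, dyadicSide (j + 1) < r ∧ r ≤ dyadicSide j := by
  obtain ⟨k, hlt, hle⟩ := exists_mem_Ioc_zpow hr one_lt_two
  refine ⟨-(k + 1), ?_, ?_⟩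
  · simpa [dyadicSide] using hlt
  · simpa [dyadicSide] using hle

theorem enorm_inv_rpow_le {γ : ℝ} (hγ : 0 ≤ γ) {r : ℝ} {j : ℤ} (hr : dyadicSide (j + 1) ≤ r) :
    ‖(r ^ γ)⁻¹‖ₑ ≤ 2 ^ γ * ENNReal.ofReal (dyadicSide j) ^ (-γ) := by
  have hr₀ : 0 < r := (dyadicSide_pos _).trans_le hr
  have hside := ofReal_dyadicSide_add_rpow j 1 (-γ)
  rw [neg_neg, pow_one, Nat.cast_one] at hside
  rw [← hside, ← Real.rpow_neg hr₀.le, Real.enorm_of_nonneg (by positivity),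
    ← ENNReal.ofReal_rpow_of_pos hr₀]
  rw [ENNReal.rpow_neg, ENNReal.rpow_neg]
  gcongr

theorem mem_dyadicNhd_of_dist_le {x y : ESp n} {j : ℤ} (h : dist x y ≤ dyadicSide j) :
    y ∈ dyadicNhd j x :=
  mem_dyadicNhd_of_forall_abs_sub_le fun i =>
    (PiLp.norm_apply_le (y - x) i).trans (by rwa [← dist_eq_norm, dist_comm])

theorem enorm_prod_div_sum_dist_rpow_le {γ : ℝ} (hγ : 0 < γ) (f : Fin m → ESp n → ℝ) (x : ESp n)
    (y : Fin m → ESp n) :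
    ‖(∏ i, f i (y i)) / (∑ i, dist x (y i)) ^ γ‖ₑ ≤
      ∑' j, 2 ^ γ * ENNReal.ofReal (dyadicSide j) ^ (-γ) *
        ∏ i, (dyadicNhd j x).indicator (fun y => ‖f i y‖ₑ) (y i) := by
  set r := ∑ i, dist x (y i)
  have hr₀ : 0 ≤ r := Finset.sum_nonneg fun _ _ => dist_nonneg
  rcases hr₀.eq_or_lt with hr | hr
  · simp [← hr, Real.zero_rpow hγ.ne']
  obtain ⟨j, hjr, hrj⟩ := exists_dyadicSide_add_one_lt_le hr
  have hmem : ∀ i, y i ∈ dyadicNhd j x := fun i =>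
    mem_dyadicNhd_of_dist_le <| le_trans
      (Finset.single_le_sum (f := fun i => dist x (y i)) (fun _ _ => dist_nonneg)
        (Finset.mem_univ i)) hrj
  refine le_trans ?_ (ENNReal.le_tsum j)
  have hind : ∏ i, (dyadicNhd j x).indicator (fun y => ‖f i y‖ₑ) (y i) = ‖∏ i, f i (y i)‖ₑ := by
    simp [Set.indicator_of_mem (hmem _), enorm_eq_nnnorm]
  rw [hind, div_eq_inv_mul, enorm_mul]
  gcongr
  exact enorm_inv_rpow_le hγ.le hjr.le

/-- The multilinear fractional integral of `|f⃗|`, as an extended nonnegative number: unlike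
`multiIα` it is never replaced by the junk value `0` when the integral diverges. -/
def absMultiIα (α : ℝ) (f : Fin m → ESp n → ℝ) (x : ESp n) : ℝ≥0∞ :=
  ∫⁻ y : Fin m → ESp n, ‖(∏ i, f i (y i)) / (∑ i, dist x (y i)) ^ ((m : ℝ) * n - α)‖ₑ

theorem ofReal_abs_multiIα_rpow_le {s : ℝ} (hs : 0 ≤ s) (α : ℝ) (f : Fin m → ESp n → ℝ)
    (x : ESp n) : ENNReal.ofReal (|multiIα α f x| ^ s) ≤ absMultiIα α f x ^ s := by
  rw [← ENNReal.ofReal_rpow_of_nonneg (abs_nonneg _) hs, ← Real.enorm_eq_ofReal_abs]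
  gcongr
  exact enorm_integral_le_lintegral_enorm _

theorem fracAverage_eq (α : ℝ) (g : Fin m → ESp n → ℝ≥0∞) (j : ℤ) (x : ESp n) :
    fracAverage α g j x =
      ENNReal.ofReal (dyadicSide j) ^ (-((m : ℝ) * n - α)) *
        ∏ l, ∫⁻ y in dyadicNhd j x, g l y := by
  have hside : ENNReal.ofReal (dyadicSide j) ≠ 0 := by simp [dyadicSide_pos]
  simp only [fracAverage, nhdAverage, Finset.prod_mul_distrib, Finset.prod_const, Finset.card_univ,
    Fintype.card_fin]
  rw [← mul_assoc, ← ENNReal.rpow_natCast _ n, ← ENNReal.rpow_neg, ← ENNReal.rpow_mul_natCast,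
    ← ENNReal.rpow_add _ _ hside ENNReal.ofReal_ne_top]
  ring_nf

theorem absMultiIα_le_tsum_fracAverage {α : ℝ} (hα : α < (m : ℝ) * n) {f : Fin m → ESp n → ℝ}
    (hf : ∀ i, Measurable (f i)) (x : ESp n) :
    absMultiIα α f x ≤
      2 ^ ((m : ℝ) * n - α) * ∑' j, fracAverage α (fun i y => ‖f i y‖ₑ) j x := by
  set γ := (m : ℝ) * n - α
  have hind : ∀ j i, Measurable ((dyadicNhd j x).indicator fun y => ‖f i y‖ₑ) := fun j i =>
    (hf i).enorm.indicator (measurableSet_dyadicNhd j x)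
  have hprod : ∀ j, Measurable fun y : Fin m → ESp n =>
      ∏ i, (dyadicNhd j x).indicator (fun y => ‖f i y‖ₑ) (y i) := fun j =>
    Finset.measurable_prod _ fun i _ => (hind j i).comp (measurable_pi_apply i)
  calc absMultiIα α f x
      ≤ ∫⁻ y : Fin m → ESp n, ∑' j, 2 ^ γ * ENNReal.ofReal (dyadicSide j) ^ (-γ) *
          ∏ i, (dyadicNhd j x).indicator (fun y => ‖f i y‖ₑ) (y i) :=
        lintegral_mono (enorm_prod_div_sum_dist_rpow_le (sub_pos.2 hα) f x)
    _ = ∑' j, 2 ^ γ * ENNReal.ofReal (dyadicSide j) ^ (-γ) *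
          ∫⁻ y : Fin m → ESp n, ∏ i, (dyadicNhd j x).indicator (fun y => ‖f i y‖ₑ) (y i) := by
        rw [lintegral_tsum fun j => ((hprod j).const_mul _).aemeasurable]
        simp only [lintegral_const_mul _ (hprod _)]
    _ = 2 ^ γ * ∑' j, fracAverage α (fun i y => ‖f i y‖ₑ) j x := by
        simp only [volume_pi, lintegral_fin_prod_eq_prod _ (hind _), fracAverage_eq, mul_assoc,
          lintegral_indicator (measurableSet_dyadicNhd _ x), ENNReal.tsum_mul_left]
        rfl

theorem fracAverage_le_multiMα (hn : 0 < n) (hm : 0 < m) (α : ℝ) (f : Fin m → ESp n → ℝ) (j : ℤ)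
    (x : ESp n) :
    fracAverage α (fun i y => ‖f i y‖ₑ) j x ≤ 3 ^ ((m : ℝ) * n - α) * multiMα α f x := by
  set γ := (m : ℝ) * n - α
  have hn' : (n : ℝ) ≠ 0 := by exact_mod_cast hn.ne'
  have hm' : (m : ℝ) ≠ 0 := by exact_mod_cast hm.ne'
  obtain ⟨Q, hQ, hsub, hvol⟩ := exists_isCube_icoCube_subset
    (fun i => (dyadicIndex j x i - 1) * dyadicSide j)
    (mul_pos three_pos (dyadicSide_pos j))
  rw [← dyadicNhd_eq_icoCube] at hsub hvol
  have hQ_pow : ((volume Q ^ (1 - α / (m * n)))⁻¹) ^ m =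
      ENNReal.ofReal (3 * dyadicSide j) ^ (-γ) := by
    rw [hvol, volume_dyadicNhd, ← ENNReal.rpow_neg, ← ENNReal.rpow_natCast_mul,
      ← ENNReal.rpow_mul_natCast]
    congr 1
    simp only [γ]
    field_simp
  have hthree : ENNReal.ofReal (dyadicSide j) ^ (-γ) =
      3 ^ γ * ENNReal.ofReal (3 * dyadicSide j) ^ (-γ) := by
    rw [ENNReal.ofReal_mul zero_le_three, ENNReal.ofReal_ofNat,
      ENNReal.mul_rpow_of_ne_top (by finiteness) (by finiteness), ← mul_assoc,
      ← ENNReal.rpow_add _ _ three_ne_zero (by finiteness), add_neg_cancel, ENNReal.rpow_zero,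
      one_mul]
  calc fracAverage α (fun i y => ‖f i y‖ₑ) j x
      = 3 ^ γ * (ENNReal.ofReal (3 * dyadicSide j) ^ (-γ) *
          ∏ i, ∫⁻ y in dyadicNhd j x, ‖f i y‖ₑ) := by rw [fracAverage_eq, ← mul_assoc, ← hthree]
    _ ≤ 3 ^ γ * (ENNReal.ofReal (3 * dyadicSide j) ^ (-γ) * ∏ i, ∫⁻ y in Q, ‖f i y‖ₑ) := by
        gcongr
    _ = 3 ^ γ * ∏ i, (volume Q ^ (1 - α / (m * n)))⁻¹ * ∫⁻ y in Q, ENNReal.ofReal |f i y| := by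
        simp only [Finset.prod_mul_distrib, Finset.prod_const, Finset.card_univ, Fintype.card_fin,
          hQ_pow, Real.enorm_eq_ofReal_abs]
    _ ≤ 3 ^ γ * multiMα α f x := by
        gcongr
        exact le_iSup₂_of_le Q hQ <| le_iSup_of_le (hsub (mem_dyadicNhd_self j x)) le_rfl

end Pointwise

theorem IsHalfComparable.exists_lintegral_absMultiIα_rpow_le {n m : ℕ} {α : ℝ} (hα₀ : 0 < α)
    (hα : α < (m : ℝ) * n) {s : ℝ} (hs : 0 < s) {ν : Measure (ESp n)} {C : ℝ≥0∞}
    (hν : IsHalfComparable ν C) (hC : C ≠ ⊤) :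
    ∃ K < ⊤, ∀ f : Fin m → ESp n → ℝ, (∀ i, Measurable (f i)) →
      ∫⁻ x, absMultiIα α f x ^ s ∂ν ≤ K * ∫⁻ x, multiMα α f x ^ s ∂ν := by
  obtain ⟨hm, hn⟩ : 0 < m ∧ 0 < n := CanonicallyOrderedAdd.mul_pos.1 <| by
    exact_mod_cast hα₀.trans hα
  set γ := (m : ℝ) * n - α
  have : 0 ≤ γ := (sub_pos.2 hα).le
  obtain ⟨K, hK, hsum⟩ := exists_lintegral_tsum_fracAverage_rpow_le hm hα₀ hs hν hC
  refine ⟨(2 ^ γ) ^ s * (K * (3 ^ γ) ^ s), by finiteness, fun f hf => ?_⟩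
  set a := fracAverage α fun i y => ‖f i y‖ₑ
  calc ∫⁻ x, absMultiIα α f x ^ s ∂ν
      ≤ ∫⁻ x, (2 ^ γ * ∑' j, a j x) ^ s ∂ν := by
        gcongr with x
        exact absMultiIα_le_tsum_fracAverage hα hf x
    _ = (2 ^ γ) ^ s * ∫⁻ x, (∑' j, a j x) ^ s ∂ν := by
        simp only [ENNReal.mul_rpow_of_nonneg _ _ hs.le]
        exact lintegral_const_mul' _ _ (by finiteness)
    _ ≤ (2 ^ γ) ^ s * (K * ∫⁻ x, (⨆ j, a j x) ^ s ∂ν) := by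
        gcongr
        exact hsum _ fun i => (hf i).enorm
    _ ≤ (2 ^ γ) ^ s * (K * ∫⁻ x, (3 ^ γ * multiMα α f x) ^ s ∂ν) := by
        gcongr with x
        exact iSup_le fun j => fracAverage_le_multiMα hn hm α f j x
    _ = (2 ^ γ) ^ s * (K * (3 ^ γ) ^ s) * ∫⁻ x, multiMα α f x ^ s ∂ν := by
        simp only [ENNReal.mul_rpow_of_nonneg _ _ hs.le]
        rw [lintegral_const_mul' _ _ (by finiteness), mul_assoc, mul_assoc]

theorem Moen_CoifmanFefferman_general {n m : ℕ} (α : ℝ) (hα0 : 0 < α)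
    (hα : α < (m : ℝ) * (n : ℝ)) (w : ESp n → ℝ) (hw : IsWeight w) (hAinf : IsAinfty w)
    (s : ℝ) (hs : 0 < s) :
    ∃ C : ℝ≥0∞, C < ⊤ ∧
      ∀ f : Fin m → ESp n → ℝ, (∀ i, Measurable (f i)) →
        ∫⁻ x, absMultiIα α f x ^ s * ENNReal.ofReal (w x)
          ≤ C * ∫⁻ x, (multiMα α f x) ^ s * ENNReal.ofReal (w x) := by
  obtain ⟨C, hC, hν⟩ := hAinf.exists_isHalfComparable_withDensity hw
  obtain ⟨K, hK, hle⟩ := hν.exists_lintegral_absMultiIα_rpow_le hα0 hα hs hC.ne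
  refine ⟨K, hK, fun f hf => ?_⟩
  simpa only [lintegral_withDensity_eq_lintegral_mul_non_measurable _ hw.1.ennreal_ofReal
    (.of_forall fun _ => ENNReal.ofReal_lt_top), Pi.mul_apply, mul_comm] using hle f hf

/-- **Moen: Coifman–Fefferman type estimate for multilinear fractional integrals.**
For `0 < α < mn`, every `w ∈ A_∞` and all `0 < s < ∞` there is a constant `C` with
`∫ |𝓘_α(f⃗)|^s w ≤ C ∫ 𝓜_α(f⃗)^s w` for all `f⃗` with each `fᵢ` bounded with compact
support. -/
theorem Moen_CoifmanFefferman {n m : ℕ} (hn : 0 < n) (hm : 0 < m)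
    (α : ℝ) (hα0 : 0 < α) (hα : α < (m : ℝ) * (n : ℝ))
    (w : ESp n → ℝ) (hw : IsWeight w) (hAinf : IsAinfty w)
    (s : ℝ) (hs : 0 < s) :
    ∃ C : ℝ≥0∞, C < ⊤ ∧
      ∀ f : Fin m → ESp n → ℝ, (∀ i, Measurable (f i)) →
        (∀ i, ∃ B : ℝ, ∀ x, |f i x| ≤ B) → (∀ i, HasCompactSupport (f i)) →
        ∫⁻ x, ENNReal.ofReal (|multiIα α f x| ^ s) * ENNReal.ofReal (w x)
          ≤ C * ∫⁻ x, (multiMα α f x) ^ s * ENNReal.ofReal (w x) := by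
  obtain ⟨C, hC, hle⟩ := Moen_CoifmanFefferman_general α hα0 hα w hw hAinf s hs
  exact ⟨C, hC, fun f hf _ _ => (lintegral_mono fun x =>
    mul_le_mul_left (ofReal_abs_multiIα_rpow_le hs.le α f x) _).trans (hle f hf)⟩

end
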